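/- arXiv:2508.08586 — 5 statements merged into one kernel-verified Lean document; each statement's English description precedes it below -/
import Mathlib

section
/- Let (α, μ) be a measure space, A a measurable set with μ(A) < ∞, and φ : α → ℝ a measurable function with φ ≥ 0 on A such that both φ and ℓ∘φ are integrable on A. Then for every real K > e, ∫_A φ dμ ≤ K·μ(A) + (1/(log K − 1))·∫_A ℓ(φ) dμ. -/
open MeasureTheory

noncomputable def ell (z : ℝ) : ℝ := z * Real.log z - z + 1

theorem ell_pointwise (z K : ℝ) (hz : 0 ≤ z) (hK : Real.exp 1 < K) :
    z ≤ K + (1 / (Real.log K - 1)) * ell z := by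
  have hK0 : 0 < K := (Real.exp_pos 1).trans hK
  have hL : 0 < Real.log K - 1 := by
    have := (Real.lt_log_iff_exp_lt hK0).2 hK
    linarith
  by_cases h : z ≤ K
  · have h0 : 0 ≤ ell z := by
      unfold ell
      rcases hz.eq_or_lt with h1 | h1
      · simp [← h1]
      · have h2 := mul_le_mul_of_nonneg_left (Real.one_sub_inv_le_log_of_pos h1) hz
        rw [mul_sub, mul_inv_cancel₀ h1.ne'] at h2
        linarith
    have : 0 ≤ (1 / (Real.log K - 1)) * ell z := by positivity
    linarith
  · have h := not_le.1 h
    have h1 : z * (Real.log K - 1) ≤ ell z := by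
      have := mul_le_mul_of_nonneg_left (Real.log_le_log hK0 h.le) hz
      unfold ell
      linarith
    have h2 : z ≤ (1 / (Real.log K - 1)) * ell z := by
      rw [one_div_mul_eq_div, le_div_iff₀ hL]
      exact h1
    linarith

theorem integral_le_of_ell_integrable
    {α : Type*} [MeasurableSpace α] (μ : Measure α) (A : Set α)
    (hA : MeasurableSet A) (hfin : μ A < ⊤)
    (φ : α → ℝ) (hφ : Measurable φ) (hφ0 : ∀ x ∈ A, 0 ≤ φ x)
    (hint : IntegrableOn φ A μ)
    (hint' : IntegrableOn (fun x => ell (φ x)) A μ)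
    (K : ℝ) (hK : Real.exp 1 < K) :
    ∫ x in A, φ x ∂μ ≤ K * (μ A).toReal +
      (1 / (Real.log K - 1)) * ∫ x in A, ell (φ x) ∂μ := by
  have hc : IntegrableOn (fun _ : α => K) A μ := integrableOn_const hfin.ne
  have hm := hint'.const_mul (1 / (Real.log K - 1))
  have h := setIntegral_mono_on hint (hc.add hm) hA
    (fun x hx => ell_pointwise (φ x) K (hφ0 x hx) hK)
  refine h.trans (le_of_eq ?_)
  simp only [Pi.add_apply]
  rw [integral_add hc hm, integral_const_mul, setIntegral_const, smul_eq_mul, mul_comm K]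
  rfl
end

section
/- Fix T > 0 and let d : ℕ → ℕ satisfy d(n)/n → 0 as n → ∞. For each n ≥ 1 let c_n be the probability that a Gamma-distributed random variable with shape parameter d(n)+1 and rate parameter 2n is at most T, i.e. c_n = (Gamma measure with shape d(n)+1 and rate 2n)(Iic T). Then (1/n)·log c_n → 0 as n → ∞. -/
open ProbabilityTheory

lemma gamma_aux_pdf {a r T x : ℝ} (ha : 0 < a) (hr : 0 < r) (hT : 0 < T) (hx : T < x) :
    gammaPDF a r x ≤ ENNReal.ofReal (a / (r * T)) * gammaPDF (a + 1) r x := by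
  have hx0 : 0 < x := hT.trans hx
  rw [gammaPDF_of_nonneg hx0.le, gammaPDF_of_nonneg hx0.le, ← ENNReal.ofReal_mul (by positivity)]
  apply ENNReal.ofReal_le_ofReal
  have hG := Real.Gamma_pos_of_pos ha
  have h1 : x ^ (a + 1 - 1) = x ^ (a - 1) * x := by
    rw [← Real.rpow_add_one hx0.ne']; congr 1; ring
  rw [Real.Gamma_add_one ha.ne', Real.rpow_add_one hr.ne', h1]
  have h2 : a / (r * T) * (r ^ a * r / (a * Real.Gamma a) * (x ^ (a - 1) * x) * Real.exp (-(r * x)))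
      = (r ^ a / Real.Gamma a * x ^ (a - 1) * Real.exp (-(r * x))) * (x / T) := by
    field_simp
  rw [h2]
  apply le_mul_of_one_le_right (by positivity)
  rw [one_le_div hT]; exact hx.le

lemma gamma_aux_tail {a r T : ℝ} (ha : 0 < a) (hr : 0 < r) (hT : 0 < T) :
    gammaMeasure a r (Set.Ioi T) ≤ ENNReal.ofReal (a / (r * T)) := by
  rw [gammaMeasure, MeasureTheory.withDensity_apply _ measurableSet_Ioi]
  calc _ ≤ ∫⁻ x in Set.Ioi T, ENNReal.ofReal (a / (r * T)) * gammaPDF (a + 1) r x :=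
        MeasureTheory.setLIntegral_mono' measurableSet_Ioi
          (fun x hx => gamma_aux_pdf ha hr hT hx)
    _ ≤ ∫⁻ x, ENNReal.ofReal (a / (r * T)) * gammaPDF (a + 1) r x :=
        MeasureTheory.setLIntegral_le_lintegral _ _
    _ = _ := by
        rw [MeasureTheory.lintegral_const_mul' _ _ ENNReal.ofReal_ne_top,
          lintegral_gammaPDF_eq_one (by positivity) hr, mul_one]

lemma gamma_aux_lower {a r T : ℝ} (ha : 0 < a) (hr : 0 < r) (hT : 0 < T) :
    1 - a / (r * T) ≤ (gammaMeasure a r (Set.Iic T)).toReal ∧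
      (gammaMeasure a r (Set.Iic T)).toReal ≤ 1 := by
  have := isProbabilityMeasure_gammaMeasure ha hr
  refine ⟨?_, MeasureTheory.measureReal_le_one⟩
  have h := MeasureTheory.probReal_compl_eq_one_sub (μ := gammaMeasure a r)
    (measurableSet_Iic (a := T))
  rw [Set.compl_Iic] at h
  have h2 := ENNReal.toReal_mono ENNReal.ofReal_ne_top (gamma_aux_tail ha hr hT)
  rw [ENNReal.toReal_ofReal (by positivity)] at h2
  simp only [MeasureTheory.measureReal_def] at h
  linarith

theorem log_gamma_prob_div_tendsto_zero (T : ℝ) (hT : 0 < T)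
    (d : ℕ → ℕ)
    (hdn : Filter.Tendsto (fun n => (d n : ℝ) / n) Filter.atTop (nhds 0)) :
    Filter.Tendsto
      (fun n : ℕ =>
        (1 / (n : ℝ)) *
          Real.log ((gammaMeasure ((d n : ℝ) + 1) (2 * n) (Set.Iic T)).toReal))
      Filter.atTop (nhds 0) := by
  have hinv : Filter.Tendsto (fun n : ℕ => 1 / (n : ℝ)) Filter.atTop (nhds 0) :=
    tendsto_one_div_atTop_nhds_zero_nat
  have hlow : Filter.Tendsto (fun n : ℕ => 1 - ((d n : ℝ) / n + 1 / n) * (1 / (2 * T)))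
      Filter.atTop (nhds 1) := by
    simpa using ((hdn.add hinv).mul_const (1 / (2 * T))).const_sub 1
  have hc : Filter.Tendsto
      (fun n : ℕ => (gammaMeasure ((d n : ℝ) + 1) (2 * n) (Set.Iic T)).toReal)
      Filter.atTop (nhds 1) := by
    refine tendsto_of_tendsto_of_tendsto_of_le_of_le' hlow tendsto_const_nhds ?_ ?_
    · filter_upwards [Filter.eventually_gt_atTop 0] with n hn
      have hn' : (0 : ℝ) < n := by exact_mod_cast hn
      refine le_trans (le_of_eq ?_)
        (gamma_aux_lower (a := (d n : ℝ) + 1) (r := 2 * n) (by positivity) (by positivity) hT).1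
      field_simp
    · filter_upwards [Filter.eventually_gt_atTop 0] with n hn
      have hn' : (0 : ℝ) < n := by exact_mod_cast hn
      exact (gamma_aux_lower (by positivity) (by positivity) hT).2
  have hl := hc.log one_ne_zero
  simpa using hinv.mul hl
end

section
/- Fix T ≥ 0. Let ζ : [0,T] → ℓ¹(ℕ, ℝ) be continuous (with respect to the ℓ¹ norm), and suppose that for every t ∈ [0,T] and every i ∈ ℕ one has 0 ≤ ζ(t)_i ≤ 1 and ζ(t)_{i+1} ≤ ζ(t)_i. Then there exist M ∈ ℕ and a constant c < 1 such that ζ(t)_M ≤ c for all t ∈ [0,T]. -/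
theorem exists_coord_lt_one (T : ℝ) (hT : 0 ≤ T)
    (ζ : ℝ → lp (fun _ : ℕ => ℝ) 1)
    (hcont : ContinuousOn ζ (Set.Icc 0 T))
    (hbound : ∀ t ∈ Set.Icc 0 T, ∀ i : ℕ,
      0 ≤ ζ t i ∧ ζ t i ≤ 1 ∧ ζ t (i + 1) ≤ ζ t i) :
    ∃ (M : ℕ) (c : ℝ), c < 1 ∧ ∀ t ∈ Set.Icc 0 T, ζ t M ≤ c := by
  obtain ⟨C, hC⟩ := isCompact_Icc.exists_bound_of_continuousOn hcont
  obtain ⟨M, hM⟩ := exists_nat_ge (2 * C)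
  refine ⟨M, 1 / 2, by norm_num, fun t ht => ?_⟩
  have hb := hbound t ht
  have hanti : Antitone (fun i => ζ t i) := antitone_nat_of_succ_le fun i => (hb i).2.2
  have h1 := lp.sum_rpow_le_norm_rpow (p := 1) (by simp) (ζ t) (Finset.range (M + 1))
  simp only [ENNReal.toReal_one, Real.rpow_one] at h1
  have h2 : ∑ i ∈ Finset.range (M + 1), ζ t M ≤ ∑ i ∈ Finset.range (M + 1), ‖ζ t i‖ := by
    refine Finset.sum_le_sum fun i hi => ?_
    exact (hanti (Nat.lt_succ_iff.mp (Finset.mem_range.mp hi))).trans (Real.le_norm_self _)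
  rw [Finset.sum_const, Finset.card_range, nsmul_eq_mul] at h2
  push_cast at h2
  have h3 := hC t ht
  by_contra! h
  have : (0 : ℝ) ≤ M := Nat.cast_nonneg M
  nlinarith
end

section
/- Let c ≥ 0 and let a, b be real numbers with a ≥ 0, b ≥ 0 and a − b = c. Then ℓ(a) + ℓ(b) ≥ ℓ(â) + ℓ(b̂), where â = (c + √(c² + 4))/2 and b̂ = (−c + √(c² + 4))/2. In particular, the infimum of ℓ(a)+ℓ(b) over {a,b ≥ 0 : a − b = c} equals ℓ(â)+ℓ(b̂), attained at (â, b̂), which satisfy â·b̂ = 1 and â − b̂ = c. -/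
theorem ell_tangent (x y : ℝ) (hx : 0 ≤ x) (hy : 0 < y) :
    ell y + (x - y) * Real.log y ≤ ell x := by
  unfold ell
  rcases hx.eq_or_lt with h | h
  · subst h
    simp
    linarith
  · have h1 := Real.log_le_sub_one_of_pos (div_pos hy h)
    rw [Real.log_div hy.ne' h.ne'] at h1
    have h2 := mul_le_mul_of_nonneg_left h1 h.le
    have h3 : x * (y / x - 1) = y - x := by field_simp
    rw [h3] at h2
    nlinarith

theorem ell_add_ell_min (c : ℝ) (hc : 0 ≤ c) (a b : ℝ) (ha : 0 ≤ a) (hb : 0 ≤ b)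
    (hab : a - b = c) :
    ell ((c + Real.sqrt (c ^ 2 + 4)) / 2) + ell ((-c + Real.sqrt (c ^ 2 + 4)) / 2)
        ≤ ell a + ell b ∧
      ((c + Real.sqrt (c ^ 2 + 4)) / 2) * ((-c + Real.sqrt (c ^ 2 + 4)) / 2) = 1 ∧
      ((c + Real.sqrt (c ^ 2 + 4)) / 2) - ((-c + Real.sqrt (c ^ 2 + 4)) / 2) = c := by
  have hs : Real.sqrt (c ^ 2 + 4) ^ 2 = c ^ 2 + 4 := Real.sq_sqrt (by positivity)
  have hs0 : 0 < Real.sqrt (c ^ 2 + 4) := Real.sqrt_pos.mpr (by positivity)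
  set s := Real.sqrt (c ^ 2 + 4)
  have hm : ((c + s) / 2) * ((-c + s) / 2) = 1 := by nlinarith
  have hA : 0 < (c + s) / 2 := by positivity
  have hB : 0 < (-c + s) / 2 := by
    by_contra hn
    nlinarith
  refine ⟨?_, hm, by ring⟩
  have hl := Real.log_mul hA.ne' hB.ne'
  rw [hm, Real.log_one] at hl
  have h1 := ell_tangent a _ ha hA
  have h2 := ell_tangent b _ hb hB
  have e : b - (-c + s) / 2 = a - (c + s) / 2 := by linarith
  have e2 : Real.log ((-c + s) / 2) = -Real.log ((c + s) / 2) := by linarith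
  rw [e, e2] at h2
  linarith
end

section
/- The function f : [0,∞) → ℝ defined by f(c) = ℓ((c + √(c² + 4))/2) + ℓ((−c + √(c² + 4))/2) is monotone nondecreasing on [0,∞). -/
lemma ell_aux_tangent {p q : ℝ} (hp : 0 < p) (hq : 0 < q) :
    q * (1 + Real.log p - Real.log q) ≤ p := by
  have h := Real.log_le_sub_one_of_pos (div_pos hp hq)
  rw [Real.log_div hp.ne' hq.ne'] at h
  have h2 : 1 + Real.log p - Real.log q ≤ p / q := by linarith
  rw [le_div_iff₀ hq] at h2
  linarith

lemma ell_aux_pair {c : ℝ} (hc : 0 ≤ c) :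
    0 < (c + Real.sqrt (c ^ 2 + 4)) / 2 ∧ 0 < (-c + Real.sqrt (c ^ 2 + 4)) / 2 ∧
    0 ≤ Real.log ((c + Real.sqrt (c ^ 2 + 4)) / 2) ∧
    Real.log ((-c + Real.sqrt (c ^ 2 + 4)) / 2) =
      - Real.log ((c + Real.sqrt (c ^ 2 + 4)) / 2) := by
  have hs : Real.sqrt (c ^ 2 + 4) ^ 2 = c ^ 2 + 4 := Real.sq_sqrt (by positivity)
  have h1 : c < Real.sqrt (c ^ 2 + 4) := Real.lt_sqrt_of_sq_lt (by linarith)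
  have h2 : 2 ≤ Real.sqrt (c ^ 2 + 4) := Real.le_sqrt_of_sq_le (by nlinarith)
  refine ⟨by linarith, by linarith, Real.log_nonneg (by linarith), ?_⟩
  rw [← Real.log_inv]
  congr 1
  apply eq_inv_of_mul_eq_one_left
  linarith

theorem ell_min_monotone :
    MonotoneOn
      (fun c : ℝ =>
        ell ((c + Real.sqrt (c ^ 2 + 4)) / 2) +
          ell ((-c + Real.sqrt (c ^ 2 + 4)) / 2))
      (Set.Ici (0 : ℝ)) := by
  intro c hc d hd hcd
  obtain ⟨x1, x2, x3, x4⟩ := ell_aux_pair (Set.mem_Ici.mp hc)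
  obtain ⟨y1, y2, y3, y4⟩ := ell_aux_pair (Set.mem_Ici.mp hd)
  have t1 := ell_aux_tangent x1 y1
  have t2 := ell_aux_tangent x2 y2
  simp only [ell]
  rw [x4, y4] at t2 ⊢
  have := mul_le_mul_of_nonneg_right hcd x3
  linarith
end
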